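/- arXiv:1311.5256 — 2 statements merged into one kernel-verified Lean document; each statement's English description precedes it below -/
import Mathlib

section
/- Let R be an algebraic curvature operator on ℝ⁴. Then ⟨Rω,ω⟩_h > 0 for every nonzero ω ∈ Λ²₊⊗ℂ ⊆ Λ²ℂ⁴ of the form ω = v∧w with v,w ∈ ℂ⁴ spanning an isotropic 2-plane, if and only if the quadratic form η ↦ ⟨Rη,η⟩ on Λ²₊ is 2-positive, i.e. ⟨Rη,η⟩ + ⟨Rζ,ζ⟩ > 0 for all η,ζ ∈ Λ²₊ with |η| = |ζ| = 1 and ⟨η,ζ⟩ = 0. -/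
noncomputable section

open scoped ComplexConjugate

/-- `ℝ⁴` with its standard basis. -/
abbrev V4 := Fin 4 → ℝ
/-- `Λ²ℝ⁴` in the coordinates given by the basis
`e₁∧e₂, e₁∧e₃, e₁∧e₄, e₂∧e₃, e₂∧e₄, e₃∧e₄` (0-indexed). -/
abbrev L6 := Fin 6 → ℝ
/-- Endomorphisms of `Λ²ℝ⁴`, as `6×6` matrices. -/
abbrev M6 := Fin 6 → Fin 6 → ℝ

/-- standard basis of ℝ⁴ -/
def std4 (i : Fin 4) : V4 := fun j => if j = i then 1 else 0

/-- the standard inner product of ℝ⁴ -/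
def ip4 (x y : V4) : ℝ := ∑ i, x i * y i

/-- the index pairs for the basis of Λ²ℝ⁴ -/
def pr : Fin 6 → Fin 4 × Fin 4 := ![(0,1),(0,2),(0,3),(1,2),(1,3),(2,3)]

/-- the wedge product `x ∧ y` of two vectors, in coordinates.  With this
coordinate expression, the standard inner product `ip6` below satisfies
`⟨x∧y, z∧t⟩ = ⟨x,z⟩⟨y,t⟩ − ⟨x,t⟩⟨y,z⟩`. -/
def wedge (x y : V4) : L6 := fun k => x (pr k).1 * y (pr k).2 - x (pr k).2 * y (pr k).1

/-- the inner product of Λ²ℝ⁴ -/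
def ip6 (a b : L6) : ℝ := ∑ k, a k * b k

/-- The Hodge star operator on Λ²ℝ⁴. -/
def hodge (w : L6) : L6 := ![w 5, -(w 4), w 3, w 2, -(w 1), w 0]

/-- self-dual 2-forms (the +1 eigenspace Λ²₊ of the Hodge star) -/
def SelfDual (w : L6) : Prop := hodge w = w
/-- anti-self-dual 2-forms (the −1 eigenspace Λ²₋ of the Hodge star) -/
def AntiSelfDual (w : L6) : Prop := hodge w = -w

/-- application of an endomorphism (matrix) of Λ²ℝ⁴ to a 2-form -/
def appM (A : M6) (w : L6) : L6 := fun k => ∑ l, A k l * w l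

/-- symmetry of an endomorphism of Λ²ℝ⁴ w.r.t. the inner product -/
def IsSymm6 (A : M6) : Prop := ∀ a b : L6, ip6 (appM A a) b = ip6 a (appM A b)

/-- the first Bianchi identity -/
def Bianchi (A : M6) : Prop := ∀ x y z t : V4,
  ip6 (appM A (wedge x y)) (wedge z t) + ip6 (appM A (wedge z x)) (wedge y t)
    + ip6 (appM A (wedge y z)) (wedge x t) = 0

/-- algebraic curvature operators on ℝ⁴ : symmetric endomorphisms of Λ²ℝ⁴
satisfying the first Bianchi identity.  The set of these is `S²_BΛ²ℝ⁴`. -/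
def IsCurvOp (A : M6) : Prop := IsSymm6 A ∧ Bianchi A

/-- the scalar curvature: twice the trace -/
def scal (A : M6) : ℝ := 2 * ∑ k, A k k

/-- orthogonal projection P₊ of Λ²ℝ⁴ onto Λ²₊ -/
def pplus (w : L6) : L6 := (1/2 : ℝ) • (w + hodge w)

/-- the self-dual Weyl part W₊ of a curvature operator, as a map on Λ²₊:
`W₊η = P₊(Rη) − (scal(R)/12)·η`. -/
def Wplus (A : M6) (η : L6) : L6 := pplus (appM A η) - (scal A / 12) • η

/-- `R` is PIC₊ : the quadratic form `η ↦ ⟨Rη,η⟩` on Λ²₊ is 2-positive. -/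
def PICp (A : M6) : Prop := ∀ η ζ : L6, SelfDual η → SelfDual ζ →
  ip6 η η = 1 → ip6 ζ ζ = 1 → ip6 η ζ = 0 →
  0 < ip6 (appM A η) η + ip6 (appM A ζ) ζ

/-- `R` is NNIC₊ : the quadratic form `η ↦ ⟨Rη,η⟩` on Λ²₊ is 2-nonnegative. -/
def NNICp (A : M6) : Prop := ∀ η ζ : L6, SelfDual η → SelfDual ζ →
  ip6 η η = 1 → ip6 ζ ζ = 1 → ip6 η ζ = 0 →
  0 ≤ ip6 (appM A η) η + ip6 (appM A ζ) ζ

/-- `R` is PIC₋ : the quadratic form `η ↦ ⟨Rη,η⟩` on Λ²₋ is 2-positive. -/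
def PICm (A : M6) : Prop := ∀ η ζ : L6, AntiSelfDual η → AntiSelfDual ζ →
  ip6 η η = 1 → ip6 ζ ζ = 1 → ip6 η ζ = 0 →
  0 < ip6 (appM A η) η + ip6 (appM A ζ) ζ

/-- `R` is NNIC₋ : the quadratic form `η ↦ ⟨Rη,η⟩` on Λ²₋ is 2-nonnegative. -/
def NNICm (A : M6) : Prop := ∀ η ζ : L6, AntiSelfDual η → AntiSelfDual ζ →
  ip6 η η = 1 → ip6 ζ ζ = 1 → ip6 η ζ = 0 →
  0 ≤ ip6 (appM A η) η + ip6 (appM A ζ) ζ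

/- ### complexifications -/

/-- `ℂ⁴` -/
abbrev VC4 := Fin 4 → ℂ
/-- `Λ²ℂ⁴` -/
abbrev LC6 := Fin 6 → ℂ

/-- the wedge product on ℂ⁴ -/
def wedgeC (x y : VC4) : LC6 := fun k => x (pr k).1 * y (pr k).2 - x (pr k).2 * y (pr k).1

/-- the complex-bilinear extension of the inner product of ℝ⁴ -/
def bilC4 (x y : VC4) : ℂ := ∑ i, x i * y i

/-- the complex-bilinear extension of the inner product of Λ²ℝ⁴ -/
def bilC6 (a b : LC6) : ℂ := ∑ k, a k * b k

/-- the Hermitian inner product `⟨·,·⟩_h` on Λ²ℂ⁴ associated to the real inner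
product on Λ²ℝ⁴ -/
def hermC6 (a b : LC6) : ℂ := ∑ k, a k * conj (b k)

/-- the complex-linear extension of an endomorphism of Λ²ℝ⁴ to Λ²ℂ⁴ -/
def appMC (A : M6) (w : LC6) : LC6 := fun k => ∑ l, (A k l : ℂ) * w l

/-- the complex-linear extension of the Hodge star -/
def hodgeC (w : LC6) : LC6 := ![w 5, -(w 4), w 3, w 2, -(w 1), w 0]

/-- membership in `Λ²₊ ⊗ ℂ` -/
def SelfDualC (w : LC6) : Prop := hodgeC w = w

/-!
Write `ω = η + iζ` with `η, ζ` real. Since `R` is real and symmetric,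
`⟨Rω, ω⟩_h = ⟨Rη, η⟩ + ⟨Rζ, ζ⟩`, while the bilinear equation `⟨ω, ω⟩ = 0` says that `η` and `ζ` are
orthogonal of equal length. So 2-positivity on a real subspace `E` is, up to rescaling, positivity
on the nonzero null vectors of `E ⊗ ℂ`. For `E = Λ²₊` these null vectors are exactly the wedges of
isotropic pairs: seen as a skew matrix `M`, a self-dual `ω` satisfies `M Mᵀ = ½ ⟨ω, ω⟩ I`, so the
rows of `M` span an isotropic plane when `ω` is null, and `ω` is a multiple of the wedge of two rows
by the Plücker relation.
-/

section NullVectors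

open Matrix

variable {n : Type*} [Fintype n]

/-- A square matrix `S` is 2-positive on a subspace `E` when the sum of the values of its quadratic
form on any orthonormal pair of vectors of `E` is positive. -/
def TwoPositiveOn (S : Matrix n n ℝ) (E : Submodule ℝ (n → ℝ)) : Prop :=
  ∀ η ζ : n → ℝ, η ∈ E → ζ ∈ E → η ⬝ᵥ η = 1 → ζ ⬝ᵥ ζ = 1 → η ⬝ᵥ ζ = 0 →
    0 < (S *ᵥ η) ⬝ᵥ η + (S *ᵥ ζ) ⬝ᵥ ζ

theorem TwoPositiveOn.pos_of_orthogonal {S : Matrix n n ℝ} {E : Submodule ℝ (n → ℝ)}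
    (hS : TwoPositiveOn S E) {η ζ : n → ℝ} (hη : η ∈ E) (hζ : ζ ∈ E) (hη₀ : η ≠ 0)
    (hlen : η ⬝ᵥ η = ζ ⬝ᵥ ζ) (horth : η ⬝ᵥ ζ = 0) :
    0 < (S *ᵥ η) ⬝ᵥ η + (S *ᵥ ζ) ⬝ᵥ ζ := by
  have hpos : 0 < η ⬝ᵥ η := by simpa using dotProduct_star_self_pos_iff.2 hη₀
  obtain ⟨c, hc⟩ : ∃ c : ℝ, c * c = (η ⬝ᵥ η)⁻¹ :=
    ⟨√(η ⬝ᵥ η)⁻¹, Real.mul_self_sqrt (inv_nonneg.2 hpos.le)⟩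
  have hunit : c * (c * (η ⬝ᵥ η)) = 1 := by rw [← mul_assoc, hc, inv_mul_cancel₀ hpos.ne']
  have hscaled : 0 < c * c * ((S *ᵥ η) ⬝ᵥ η + (S *ᵥ ζ) ⬝ᵥ ζ) := by
    have := hS (c • η) (c • ζ) (E.smul_mem c hη) (E.smul_mem c hζ)
      (by simpa using hunit) (by simpa [← hlen] using hunit) (by simp [horth])
    simp only [mulVec_smul, smul_dotProduct, dotProduct_smul, smul_eq_mul] at this
    linarith
  exact pos_of_mul_pos_right hscaled (mul_self_nonneg c)

theorem dotProduct_self_eq_zero_iff_re_im (ω : n → ℂ) :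
    ω ⬝ᵥ ω = 0 ↔
      (Complex.re ∘ ω) ⬝ᵥ (Complex.re ∘ ω) = (Complex.im ∘ ω) ⬝ᵥ (Complex.im ∘ ω) ∧
        (Complex.re ∘ ω) ⬝ᵥ (Complex.im ∘ ω) = 0 := by
  have hre : (ω ⬝ᵥ ω).re =
      (Complex.re ∘ ω) ⬝ᵥ (Complex.re ∘ ω) - (Complex.im ∘ ω) ⬝ᵥ (Complex.im ∘ ω) := by
    simp [dotProduct, Finset.sum_sub_distrib]
  have him : (ω ⬝ᵥ ω).im = 2 * ((Complex.re ∘ ω) ⬝ᵥ (Complex.im ∘ ω)) := by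
    simp only [dotProduct, Complex.im_sum, Complex.mul_im, Finset.mul_sum, Function.comp_apply]
    exact Finset.sum_congr rfl fun i _ => by ring
  rw [Complex.ext_iff, hre, him]
  simp [sub_eq_zero]

theorem map_ofReal_mulVec_dotProduct_star {S : Matrix n n ℝ} (hS : S.IsSymm) (ω : n → ℂ) :
    (S.map Complex.ofReal *ᵥ ω) ⬝ᵥ star ω =
      (((S *ᵥ (Complex.re ∘ ω)) ⬝ᵥ (Complex.re ∘ ω) +
        (S *ᵥ (Complex.im ∘ ω)) ⬝ᵥ (Complex.im ∘ ω) : ℝ) : ℂ) := by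
  set x : n → ℝ := Complex.re ∘ ω
  set y : n → ℝ := Complex.im ∘ ω
  have hω : ω = Complex.ofReal ∘ x + Complex.I • (Complex.ofReal ∘ y) := by
    ext i
    simp [x, y, mul_comm Complex.I, Complex.re_add_im]
  have hstar : star ω = Complex.ofReal ∘ x - Complex.I • (Complex.ofReal ∘ y) := by
    ext i
    apply Complex.ext <;> simp [x, y]
  have hreal (u v : n → ℝ) : (S.map Complex.ofReal *ᵥ (Complex.ofReal ∘ u)) ⬝ᵥ
      (Complex.ofReal ∘ v) = (((S *ᵥ u) ⬝ᵥ v : ℝ) : ℂ) := by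
    simp [dotProduct, mulVec]
  have hcross : (S *ᵥ y) ⬝ᵥ x = (S *ᵥ x) ⬝ᵥ y := by
    rw [dotProduct_comm, dotProduct_mulVec, ← mulVec_transpose, hS.eq]
  rw [hstar, hω]
  simp only [mulVec_add, mulVec_smul, add_dotProduct, dotProduct_sub, smul_dotProduct,
    dotProduct_smul, smul_eq_mul, hreal, hcross, Complex.ofReal_add]
  linear_combination -(((S *ᵥ y) ⬝ᵥ y : ℝ) : ℂ) * Complex.I_mul_I

open scoped ComplexOrder in
theorem forall_null_pos_iff_twoPositiveOn {S : Matrix n n ℝ} (hS : S.IsSymm)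
    (E : Submodule ℝ (n → ℝ)) :
    (∀ ω : n → ℂ, Complex.re ∘ ω ∈ E → Complex.im ∘ ω ∈ E → ω ⬝ᵥ ω = 0 → ω ≠ 0 →
      0 < (S.map Complex.ofReal *ᵥ ω) ⬝ᵥ star ω) ↔ TwoPositiveOn S E := by
  simp only [map_ofReal_mulVec_dotProduct_star hS, Complex.zero_lt_real,
    dotProduct_self_eq_zero_iff_re_im]
  constructor
  · intro hpos η ζ hη hζ hη₁ hζ₁ horth
    refine hpos (fun i => ⟨η i, ζ i⟩) hη hζ ⟨hη₁.trans hζ₁.symm, horth⟩ fun hω => ?_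
    have hη₀ : η = 0 := funext fun i => congrArg Complex.re (congrFun hω i)
    simp [hη₀] at hη₁
  · rintro hpos ω hre him ⟨hlen, horth⟩ hω
    refine hpos.pos_of_orthogonal hre him (fun hre₀ => hω ?_) hlen horth
    have him₀ : Complex.im ∘ ω = 0 := by
      rw [← dotProduct_self_eq_zero, ← hlen, hre₀, dotProduct_zero]
    exact funext fun i => Complex.ext (congrFun hre₀ i) (congrFun him₀ i)

end NullVectors

section TwoForms

open Matrix

theorem IsSymm6.isSymm {A : M6} (hA : IsSymm6 A) : (Matrix.of A).IsSymm := by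
  ext i j
  simpa [ip6, appM, Pi.single_apply] using hA (Pi.single i 1) (Pi.single j 1)

/-- The self-dual 2-forms `Λ²₊` as a subspace of `Λ²ℝ⁴`. -/
def selfDualForms : Submodule ℝ L6 where
  carrier := {η | SelfDual η}
  add_mem' {η ζ} hη hζ := by
    have hadd : hodge (η + ζ) = hodge η + hodge ζ := by
      ext k; fin_cases k <;> simp [hodge, add_comm]
    exact hadd.trans (congrArg₂ (· + ·) hη hζ)
  zero_mem' := by
    ext k; fin_cases k <;> simp [hodge]
  smul_mem' c η hη := by
    have hsmul : hodge (c • η) = c • hodge η := by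
      ext k; fin_cases k <;> simp [hodge]
    exact hsmul.trans (congrArg (c • ·) hη)

theorem selfDualC_iff_re_im (ω : LC6) :
    SelfDualC ω ↔ Complex.re ∘ ω ∈ selfDualForms ∧ Complex.im ∘ ω ∈ selfDualForms := by
  have hre : Complex.re ∘ hodgeC ω = hodge (Complex.re ∘ ω) := by
    ext k; fin_cases k <;> simp [hodge, hodgeC]
  have him : Complex.im ∘ hodgeC ω = hodge (Complex.im ∘ ω) := by
    ext k; fin_cases k <;> simp [hodge, hodgeC]
  change hodgeC ω = ω ↔ hodge (Complex.re ∘ ω) = _ ∧ hodge (Complex.im ∘ ω) = _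
  rw [← hre, ← him]
  simp only [funext_iff, Complex.ext_iff, Function.comp_apply, forall_and]

theorem bilC4_smul_left (c : ℂ) (v w : VC4) : bilC4 (c • v) w = c * bilC4 v w :=
  smul_dotProduct c v w

theorem bilC4_smul_right (c : ℂ) (v w : VC4) : bilC4 v (c • w) = c * bilC4 v w :=
  dotProduct_smul c v w

theorem wedgeC_smul_left (c : ℂ) (v w : VC4) : wedgeC (c • v) w = c • wedgeC v w := by
  ext k
  simp only [wedgeC, Pi.smul_apply, smul_eq_mul]
  ring

theorem bilC6_wedgeC_wedgeC (v w x y : VC4) :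
    bilC6 (wedgeC v w) (wedgeC x y) = bilC4 v x * bilC4 w y - bilC4 v y * bilC4 w x := by
  simp only [bilC6, bilC4, wedgeC, pr, Fin.sum_univ_six, Fin.sum_univ_four, Fin.isValue,
    cons_val_zero, cons_val_one, cons_val]
  ring

/-- The skew-symmetric matrix of a 2-form: its `(i, j)` entry is the coefficient of `eᵢ ∧ eⱼ`, so
that its rows are the contractions of the form with the standard basis vectors. -/
def skewMatrix (ω : LC6) : Matrix (Fin 4) (Fin 4) ℂ :=
  !![0, ω 0, ω 1, ω 2; -ω 0, 0, ω 3, ω 4; -ω 1, -ω 3, 0, ω 5; -ω 2, -ω 4, -ω 5, 0]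

/-- The hypothesis is the Plücker relation `ω ∧ ω = 0`. -/
theorem wedgeC_skewMatrix_rows {ω : LC6} (hω : bilC6 ω (hodgeC ω) = 0) (k : Fin 6) :
    wedgeC (skewMatrix ω (pr k).1) (skewMatrix ω (pr k).2) = ω k • ω := by
  have plucker : ω 0 * ω 5 - ω 1 * ω 4 + ω 2 * ω 3 = 0 := by
    simp only [bilC6, hodgeC, Fin.sum_univ_six, Fin.isValue, cons_val_zero, cons_val_one, cons_val,
      mul_neg] at hω
    linear_combination hω / 2
  ext l
  fin_cases k <;> fin_cases l <;> simp [wedgeC, pr, skewMatrix] <;> grind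

theorem SelfDualC.bilC4_skewMatrix_rows {ω : LC6} (hω : SelfDualC ω) (i j : Fin 4) :
    bilC4 (skewMatrix ω i) (skewMatrix ω j) = if i = j then bilC6 ω ω / 2 else 0 := by
  have h₀ : ω 5 = ω 0 := congrFun hω 0
  have h₁ : -ω 4 = ω 1 := congrFun hω 1
  have h₂ : ω 3 = ω 2 := congrFun hω 2
  simp only [bilC4, bilC6, Fin.sum_univ_four, Fin.sum_univ_six]
  fin_cases i <;> fin_cases j <;> simp [skewMatrix, h₀, ← h₁, h₂] <;> ring

theorem SelfDualC.exists_isotropic_wedgeC_eq_iff {ω : LC6} (hω : SelfDualC ω) :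
    (∃ v w : VC4, bilC4 v v = 0 ∧ bilC4 w w = 0 ∧ bilC4 v w = 0 ∧ wedgeC v w = ω) ↔
      bilC6 ω ω = 0 := by
  constructor
  · rintro ⟨v, w, hv, -, hvw, rfl⟩
    rw [bilC6_wedgeC_wedgeC, hv, hvw, zero_mul, zero_mul, sub_zero]
  · intro hnull
    rcases eq_or_ne ω 0 with rfl | hω₀
    · exact ⟨0, 0, by simp [bilC4], by simp [bilC4], by simp [bilC4], by ext; simp [wedgeC]⟩
    obtain ⟨k, hk⟩ := Function.ne_iff.1 hω₀
    have hrows (i j : Fin 4) : bilC4 (skewMatrix ω i) (skewMatrix ω j) = 0 := by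
      simp [hω.bilC4_skewMatrix_rows, hnull]
    have hplucker : bilC6 ω (hodgeC ω) = 0 := by rw [hω, hnull]
    refine ⟨(ω k)⁻¹ • skewMatrix ω (pr k).1, skewMatrix ω (pr k).2, ?_, hrows _ _, ?_, ?_⟩
    · rw [bilC4_smul_left, bilC4_smul_right, hrows, mul_zero, mul_zero]
    · rw [bilC4_smul_left, hrows, mul_zero]
    · rw [wedgeC_smul_left, wedgeC_skewMatrix_rows hplucker, inv_smul_smul₀ hk]

end TwoForms

open scoped ComplexOrder in
theorem positive_on_isotropic_selfdual_iff_two_positive_general (A : M6) (hA : IsSymm6 A) :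
    (∀ v w : VC4, bilC4 v v = 0 → bilC4 w w = 0 → bilC4 v w = 0 →
      SelfDualC (wedgeC v w) → wedgeC v w ≠ 0 →
      0 < hermC6 (appMC A (wedgeC v w)) (wedgeC v w)) ↔
    (∀ η ζ : L6, SelfDual η → SelfDual ζ → ip6 η η = 1 → ip6 ζ ζ = 1 →
      ip6 η ζ = 0 → 0 < ip6 (appM A η) η + ip6 (appM A ζ) ζ) := by
  -- The coordinate definitions unfold to `dotProduct`, `mulVec` and membership in `selfDualForms`.
  refine Iff.trans ?_ (forall_null_pos_iff_twoPositiveOn hA.isSymm selfDualForms)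
  constructor
  · intro hpos ω hre him hnull hω₀
    have hω := (selfDualC_iff_re_im ω).2 ⟨hre, him⟩
    obtain ⟨v, w, hv, hw, hvw, rfl⟩ := hω.exists_isotropic_wedgeC_eq_iff.2 hnull
    exact hpos v w hv hw hvw hω hω₀
  · intro hpos v w hv hw hvw hω hω₀
    obtain ⟨hre, him⟩ := (selfDualC_iff_re_im _).1 hω
    have hnull := hω.exists_isotropic_wedgeC_eq_iff.1 ⟨v, w, hv, hw, hvw, rfl⟩
    exact hpos _ hre him hnull hω₀

open scoped ComplexOrder in
/-- positivity of the complexified curvature operator on nonzero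
isotropic self-dual forms `ω = v∧w` is equivalent to 2-positivity of the
quadratic form `η ↦ ⟨Rη,η⟩` on `Λ²₊`. -/
theorem positive_on_isotropic_selfdual_iff_two_positive (A : M6) (hA : IsCurvOp A) :
    (∀ v w : VC4, bilC4 v v = 0 → bilC4 w w = 0 → bilC4 v w = 0 →
      SelfDualC (wedgeC v w) → wedgeC v w ≠ 0 →
      0 < hermC6 (appMC A (wedgeC v w)) (wedgeC v w)) ↔
    (∀ η ζ : L6, SelfDual η → SelfDual ζ → ip6 η η = 1 → ip6 ζ ζ = 1 →
      ip6 η ζ = 0 → 0 < ip6 (appM A η) η + ip6 (appM A ζ) ζ) :=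
  positive_on_isotropic_selfdual_iff_two_positive_general A hA.1
end
end

section
/- Let R be an algebraic curvature operator on ℝ⁴. Then R is PIC₊ if and only if for every positively oriented orthonormal basis (f₁,f₂,f₃,f₄) of ℝ⁴ one has R₁₃₁₃ + R₁₄₁₄ + R₂₃₂₃ + R₂₄₂₄ − 2R₁₂₃₄ > 0, where R_{ijkl} = ⟨R(fᵢ∧fⱼ), fₖ∧fₗ⟩. -/
noncomputable section

open scoped ComplexConjugate

/-! For a positively oriented orthonormal basis `f`, the orthogonal projections of `f₁ ∧ f₃` and
`f₁ ∧ f₄` to `Λ²₊` are `½ (f₁ ∧ f₃ - f₂ ∧ f₄)` and `½ (f₁ ∧ f₄ + f₂ ∧ f₃)`; they are orthogonal of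
squared length `½`. Expanding `⟨Rη, η⟩ + ⟨Rζ, ζ⟩` on this pair, the Bianchi identity turns the mixed
terms into `-½ R₁₂₃₄`, which gives a quarter of the isotropic curvature of `f`. Conversely,
`u ↦ P₊(e₁ ∧ u)` is, up to scale, an isometry of `e₁^⊥ = ℝ³` onto `Λ²₊`, and an orthonormal pair
`u, v` in `ℝ³` completes to the oriented basis `(e₁, u × v, u, v)`; so every orthogonal pair of
self-dual forms of squared length `½` arises from an oriented orthonormal basis. -/

open Matrix

lemma eq_of_dotProduct_self_eq {n R : Type*} [Fintype n] [CommRing R] [LinearOrder R]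
    [IsStrictOrderedRing R] {a b : n → R} (ha : a ⬝ᵥ a = a ⬝ᵥ b) (hb : b ⬝ᵥ b = a ⬝ᵥ b) :
    a = b := by
  have hsub : (a - b) ⬝ᵥ (a - b) = 0 := by
    rw [sub_dotProduct, dotProduct_sub, dotProduct_sub, dotProduct_comm b a, ha, hb]
    ring
  exact sub_eq_zero.mp (dotProduct_self_eq_zero.mp hsub)

lemma ip4_eq_dotProduct (x y : V4) : ip4 x y = x ⬝ᵥ y := rfl

lemma ip6_eq_dotProduct (a b : L6) : ip6 a b = a ⬝ᵥ b := rfl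

lemma ip6_smul_smul (r s : ℝ) (a b : L6) : ip6 (r • a) (s • b) = r * s * ip6 a b := by
  simp only [ip6_eq_dotProduct, smul_dotProduct, dotProduct_smul, smul_eq_mul]
  ring

lemma wedge_swap (x y : V4) : wedge y x = -wedge x y := by
  ext k
  simp only [wedge, Pi.neg_apply]
  ring

lemma ip6_wedge (x y z t : V4) :
    ip6 (wedge x y) (wedge z t) = ip4 x z * ip4 y t - ip4 x t * ip4 y z := by
  simp only [ip6, ip4, wedge, pr, Fin.sum_univ_six, Fin.sum_univ_four, cons_val]
  ring

lemma ip6_hodge (a b : L6) : ip6 (hodge a) (hodge b) = ip6 a b := by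
  simp only [ip6, hodge, Fin.sum_univ_six, cons_val]
  ring

lemma hodge_smul (r : ℝ) (a : L6) : hodge (r • a) = r • hodge a := by
  simp only [hodge, Pi.smul_apply, smul_eq_mul, smul_cons, smul_empty, mul_neg]

lemma selfDual_iff {a : L6} : SelfDual a ↔ a 3 = a 2 ∧ a 4 = -a 1 ∧ a 5 = a 0 := by
  refine ⟨fun h => ⟨(congrFun h 3).symm, (congrFun h 4).symm, (congrFun h 5).symm⟩, ?_⟩
  rintro ⟨h₃, h₄, h₅⟩
  ext k
  fin_cases k
  exacts [h₅, neg_eq_iff_eq_neg.mpr h₄, h₃, h₃.symm, h₄.symm, h₅.symm]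

lemma SelfDual.eq_of_coord_eq {a b : L6} (ha : SelfDual a) (hb : SelfDual b) (h₀ : a 0 = b 0)
    (h₁ : a 1 = b 1) (h₂ : a 2 = b 2) : a = b := by
  obtain ⟨ha₃, ha₄, ha₅⟩ := selfDual_iff.mp ha
  obtain ⟨hb₃, hb₄, hb₅⟩ := selfDual_iff.mp hb
  ext k
  fin_cases k
  exacts [h₀, h₁, h₂, by simp [ha₃, hb₃, h₂], by simp [ha₄, hb₄, h₁], by simp [ha₅, hb₅, h₀]]

lemma SelfDual.smul {a : L6} (ha : SelfDual a) (r : ℝ) : SelfDual (r • a) := by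
  rw [SelfDual, hodge_smul, ha]

lemma ip6_hodge_wedge (f : Fin 4 → V4) :
    ip6 (hodge (wedge (f 0) (f 1))) (wedge (f 2) (f 3)) = (of f).det := by
  rw [det_succ_row_zero]
  simp only [ip6, hodge, wedge, pr, Fin.sum_univ_six, cons_val, Fin.sum_univ_four, det_fin_three,
    of_apply, submatrix_apply, Fin.succAbove, Fin.reduceSucc, Fin.reduceCastSucc, Fin.reduceLT,
    ↓reduceIte, Fin.coe_ofNat_eq_mod]
  ring

lemma selfDual_pplus (a : L6) : SelfDual (pplus a) := by
  simp only [selfDual_iff, pplus, hodge, Pi.smul_apply, Pi.add_apply, smul_eq_mul, cons_val]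
  exact ⟨by ring, by ring, by ring⟩

lemma ip6_pplus_pplus (a b : L6) :
    ip6 (pplus a) (pplus b) = (ip6 a b + ip6 (hodge a) b) / 2 := by
  simp only [ip6, pplus, hodge, Fin.sum_univ_six, Pi.smul_apply, Pi.add_apply, smul_eq_mul,
    cons_val]
  ring

lemma ip6_pplus_wedge_pplus_wedge (x y z : V4) :
    ip6 (pplus (wedge x y)) (pplus (wedge x z)) =
      (ip4 x x * ip4 y z - ip4 x z * ip4 y x) / 2 := by
  have hdet : ip6 (hodge (wedge x y)) (wedge x z) = 0 :=
    (ip6_hodge_wedge ![x, y, x, z]).trans (det_zero_of_row_eq (i := 0) (j := 2) (by decide) rfl)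
  rw [ip6_pplus_pplus, hdet, add_zero, ip6_wedge]

/-- A positively oriented orthonormal basis of `ℝ⁴`. An orthonormal family has determinant `±1`, so
the orientation is encoded as `det = 1`. -/
structure OrientedOrthonormal (f : Fin 4 → V4) : Prop where
  ip4_eq : ∀ i j, ip4 (f i) (f j) = if i = j then 1 else 0
  det_eq_one : (of f).det = 1

namespace OrientedOrthonormal

variable {f : Fin 4 → V4}

lemma comp_perm (hf : OrientedOrthonormal f) {σ : Equiv.Perm (Fin 4)} (hσ : σ.sign = 1) :
    OrientedOrthonormal (f ∘ σ) where
  ip4_eq i j := by simp only [Function.comp_apply, hf.ip4_eq, σ.injective.eq_iff]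
  det_eq_one := by
    have hdet := det_permute σ (of f)
    rw [hσ, hf.det_eq_one, Units.val_one, Int.cast_one, one_mul] at hdet
    exact hdet

lemma hodge_wedge (hf : OrientedOrthonormal f) :
    hodge (wedge (f 0) (f 1)) = wedge (f 2) (f 3) := by
  -- Both sides are unit vectors, and their inner product is `det f = 1`.
  have hinner : ip6 (hodge (wedge (f 0) (f 1))) (wedge (f 2) (f 3)) = 1 :=
    (ip6_hodge_wedge f).trans hf.det_eq_one
  apply eq_of_dotProduct_self_eq <;> simp only [← ip6_eq_dotProduct, hinner]
  · simp [ip6_hodge, ip6_wedge, hf.ip4_eq]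
  · simp [ip6_wedge, hf.ip4_eq]

lemma pplus_wedge_zero_two (hf : OrientedOrthonormal f) :
    pplus (wedge (f 0) (f 2)) = (1 / 2 : ℝ) • (wedge (f 0) (f 2) - wedge (f 1) (f 3)) := by
  have hhodge : hodge (wedge (f 0) (f 2)) = wedge (f 3) (f 1) :=
    (hf.comp_perm (σ := c[1, 2, 3]) (by decide)).hodge_wedge
  rw [pplus, hhodge, wedge_swap (f 1), sub_eq_add_neg]

lemma pplus_wedge_zero_three (hf : OrientedOrthonormal f) :
    pplus (wedge (f 0) (f 3)) = (1 / 2 : ℝ) • (wedge (f 0) (f 3) + wedge (f 1) (f 2)) := by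
  have hhodge : hodge (wedge (f 0) (f 3)) = wedge (f 1) (f 2) :=
    (hf.comp_perm (σ := c[1, 3, 2]) (by decide)).hodge_wedge
  rw [pplus, hhodge]

end OrientedOrthonormal

lemma orientedOrthonormal_cross {u v : Fin 3 → ℝ} (hu : u ⬝ᵥ u = 1) (hv : v ⬝ᵥ v = 1)
    (huv : u ⬝ᵥ v = 0) :
    OrientedOrthonormal ![vecCons 1 0, vecCons 0 (u ⨯₃ v), vecCons 0 u, vecCons 0 v] where
  ip4_eq i j := by
    have hvu : v ⬝ᵥ u = 0 := dotProduct_comm v u ▸ huv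
    fin_cases i <;> fin_cases j <;>
      simp [ip4_eq_dotProduct, cross_dot_cross, dotProduct_comm (u ⨯₃ v), hu, hv, huv, hvu]
  det_eq_one := by
    calc
      _ = det ![u ⨯₃ v, u, v] := by
          rw [det_succ_row_zero]
          simp only [Fin.sum_univ_succ, of_apply, cons_val_zero, cons_val_succ, Pi.zero_apply,
            Fin.coe_ofNat_eq_mod, Nat.zero_mod, pow_zero, mul_one, one_mul, mul_zero, zero_mul,
            Finset.sum_const_zero, add_zero, Fin.succAbove_zero]
          rfl
      _ = (u ⨯₃ v) ⬝ᵥ (u ⨯₃ v) := (triple_product_eq_det _ u v).symm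
      _ = 1 := by rw [cross_dot_cross, hu, hv, huv]; ring

lemma SelfDual.exists_pplus_wedge_eq {a : L6} (ha : SelfDual a) :
    ∃ u : Fin 3 → ℝ, pplus (wedge (vecCons 1 0) (vecCons 0 u)) = a := by
  refine ⟨![2 * a 0, 2 * a 1, 2 * a 2], (selfDual_pplus _).eq_of_coord_eq ha ?_ ?_ ?_⟩ <;>
    simp only [pplus, hodge, wedge, pr, Pi.smul_apply, Pi.add_apply, smul_eq_mul, cons_val] <;>
    simp

lemma exists_orientedOrthonormal_pplus_wedge_eq {η ζ : L6} (hη : SelfDual η) (hζ : SelfDual ζ)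
    (hηη : ip6 η η = 1 / 2) (hζζ : ip6 ζ ζ = 1 / 2) (hηζ : ip6 η ζ = 0) :
    ∃ f, OrientedOrthonormal f ∧
      pplus (wedge (f 0) (f 2)) = η ∧ pplus (wedge (f 0) (f 3)) = ζ := by
  obtain ⟨u, rfl⟩ := hη.exists_pplus_wedge_eq
  obtain ⟨v, rfl⟩ := hζ.exists_pplus_wedge_eq
  simp only [ip6_pplus_wedge_pplus_wedge, ip4_eq_dotProduct, cons_dotProduct_cons,
    zero_dotProduct, dotProduct_zero] at hηη hζζ hηζ
  exact ⟨_, orientedOrthonormal_cross (u := u) (v := v) (by linarith) (by linarith) (by linarith),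
    rfl, rfl⟩

/-- The bilinear form `(η, ζ) ↦ ⟨Rη, ζ⟩` on `Λ²ℝ⁴`, bundled as a linear map so that expansions are
available through `map_add`, `map_smul` and their kin. -/
def curvForm (A : M6) : LinearMap.BilinForm ℝ L6 :=
  dotProductBilin ℝ ℝ ∘ₗ (Matrix.of A).mulVecLin

lemma curvForm_apply (A : M6) (a b : L6) : curvForm A a b = ip6 (appM A a) b := rfl

lemma curvForm_smul_smul (A : M6) (r : ℝ) (a : L6) :
    curvForm A (r • a) (r • a) = r * r * curvForm A a a := by
  simp only [map_smul, LinearMap.smul_apply, smul_eq_mul, mul_assoc]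

/-- The isotropic curvature `R₁₃₁₃ + R₁₄₁₄ + R₂₃₂₃ + R₂₄₂₄ - 2 R₁₂₃₄` of a basis `f`, with the
indices of `f` shifted down by one. -/
def isotropicCurvature (A : M6) (f : Fin 4 → V4) : ℝ :=
  curvForm A (wedge (f 0) (f 2)) (wedge (f 0) (f 2))
    + curvForm A (wedge (f 0) (f 3)) (wedge (f 0) (f 3))
    + curvForm A (wedge (f 1) (f 2)) (wedge (f 1) (f 2))
    + curvForm A (wedge (f 1) (f 3)) (wedge (f 1) (f 3))
    - 2 * curvForm A (wedge (f 0) (f 1)) (wedge (f 2) (f 3))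

lemma Bianchi.isotropicCurvature_eq {A : M6} (hA : Bianchi A) (f : Fin 4 → V4) :
    isotropicCurvature A f =
      curvForm A (wedge (f 0) (f 2) - wedge (f 1) (f 3)) (wedge (f 0) (f 2) - wedge (f 1) (f 3))
        + curvForm A (wedge (f 0) (f 3) + wedge (f 1) (f 2))
          (wedge (f 0) (f 3) + wedge (f 1) (f 2)) := by
  -- Each instance trades one pair of mixed terms for a copy of `R₁₂₃₄`.
  have h₀₁₂ := hA (f 0) (f 1) (f 2) (f 3)
  have h₀₁₃ := hA (f 0) (f 1) (f 3) (f 2)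
  simp only [← curvForm_apply, wedge_swap (f 0) (f 2), wedge_swap (f 0) (f 3),
    wedge_swap (f 2) (f 3), map_neg, LinearMap.neg_apply] at h₀₁₂ h₀₁₃
  simp only [isotropicCurvature, map_add, map_sub, LinearMap.add_apply, LinearMap.sub_apply]
  linarith

lemma OrientedOrthonormal.isotropicCurvature_eq_four_mul {A : M6} {f : Fin 4 → V4}
    (hf : OrientedOrthonormal f) (hA : Bianchi A) :
    isotropicCurvature A f =
      4 * (curvForm A (pplus (wedge (f 0) (f 2))) (pplus (wedge (f 0) (f 2)))
        + curvForm A (pplus (wedge (f 0) (f 3))) (pplus (wedge (f 0) (f 3)))) := by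
  rw [hA.isotropicCurvature_eq, hf.pplus_wedge_zero_two, hf.pplus_wedge_zero_three,
    curvForm_smul_smul, curvForm_smul_smul]
  ring

/-- Positivity of `⟨Rη, η⟩ + ⟨Rζ, ζ⟩` over the orthogonal pairs of self-dual forms of squared length
`c`. It says the same for all `c > 0`, and `c = 1` is `PICp`; this frees the choice of
normalization. -/
def TwoPositiveAt (A : M6) (c : ℝ) : Prop :=
  ∀ η ζ : L6, SelfDual η → SelfDual ζ → ip6 η η = c → ip6 ζ ζ = c → ip6 η ζ = 0 →
    0 < curvForm A η η + curvForm A ζ ζ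

lemma TwoPositiveAt.of_pos {A : M6} {c d : ℝ} (h : TwoPositiveAt A c) (hc : 0 < c) (hd : 0 < d) :
    TwoPositiveAt A d := by
  intro η ζ hη hζ hηη hζζ hηζ
  set r := √(c / d)
  have hr : r * r = c / d := Real.mul_self_sqrt (div_pos hc hd).le
  have hrd : r * r * d = c := by rw [hr, div_mul_cancel₀ c hd.ne']
  have hscaled : 0 < curvForm A (r • η) (r • η) + curvForm A (r • ζ) (r • ζ) :=
    h (r • η) (r • ζ) (hη.smul r) (hζ.smul r) (by rw [ip6_smul_smul, hηη, hrd])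
      (by rw [ip6_smul_smul, hζζ, hrd]) (by rw [ip6_smul_smul, hηζ, mul_zero])
  rw [curvForm_smul_smul, curvForm_smul_smul, ← mul_add, hr] at hscaled
  exact (mul_pos_iff_of_pos_left (div_pos hc hd)).mp hscaled

lemma picp_iff_twoPositiveAt (A : M6) {c : ℝ} (hc : 0 < c) : PICp A ↔ TwoPositiveAt A c :=
  ⟨fun h => TwoPositiveAt.of_pos (c := 1) h one_pos hc, fun h => h.of_pos hc one_pos⟩

lemma twoPositiveAt_half_iff_isotropicCurvature_pos {A : M6} (hA : Bianchi A) :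
    TwoPositiveAt A (1 / 2) ↔ ∀ f, OrientedOrthonormal f → 0 < isotropicCurvature A f := by
  constructor
  · intro h f hf
    rw [hf.isotropicCurvature_eq_four_mul hA]
    refine mul_pos four_pos (h _ _ (selfDual_pplus _) (selfDual_pplus _) ?_ ?_ ?_) <;>
      simp [ip6_pplus_wedge_pplus_wedge, hf.ip4_eq]
  · intro h η ζ hη hζ hηη hζζ hηζ
    obtain ⟨f, hf, rfl, rfl⟩ := exists_orientedOrthonormal_pplus_wedge_eq hη hζ hηη hζζ hηζ
    have hpos := h f hf
    rw [hf.isotropicCurvature_eq_four_mul hA] at hpos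
    exact (mul_pos_iff_of_pos_left four_pos).mp hpos

/-- `R` is PIC₊ iff for every positively oriented orthonormal
basis `(f₁,f₂,f₃,f₄)` one has
`R₁₃₁₃ + R₁₄₁₄ + R₂₃₂₃ + R₂₄₂₄ − 2R₁₂₃₄ > 0`. -/
theorem picPlus_iff_oriented_basis_inequality (A : M6) (hA : IsCurvOp A) :
    PICp A ↔
    ∀ f : Fin 4 → V4, (∀ i j, ip4 (f i) (f j) = if i = j then 1 else 0) →
      (Matrix.of fun i j => f i j).det = 1 →
      0 < ip6 (appM A (wedge (f 0) (f 2))) (wedge (f 0) (f 2))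
        + ip6 (appM A (wedge (f 0) (f 3))) (wedge (f 0) (f 3))
        + ip6 (appM A (wedge (f 1) (f 2))) (wedge (f 1) (f 2))
        + ip6 (appM A (wedge (f 1) (f 3))) (wedge (f 1) (f 3))
        - 2 * ip6 (appM A (wedge (f 0) (f 1))) (wedge (f 2) (f 3)) := by
  rw [picp_iff_twoPositiveAt A one_half_pos, twoPositiveAt_half_iff_isotropicCurvature_pos hA.2]
  exact ⟨fun h f horth hdet => h f ⟨horth, hdet⟩, fun h f hf => h f hf.ip4_eq hf.det_eq_one⟩
end
end
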